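/- Let p be an odd prime, let G be a finite group of order divisible by p, and let S be a Sylow p-subgroup of G that is split metacyclic, with E = Ω1(S) not contained in Z(S). Assume G has no proper strongly p-embedded subgroup. Let Z = E ∩ Z(S) and fix a subgroup Q of E of order p with Q not contained in Z(S). Then the Grodal subgroup R of N_G(S) is the subgroup generated by N_G(S) ∩ O^{p'}(N_G(Z)) together with all elements g of N_G(S) that can be written as a product g = h·h'·t with h ∈ O^{p'}(N_G(E)) ∩ C_G(Q), h' ∈ O^{p'}(C_G(Q)) and t ∈ S. -/

import Mathlib

open Subgroup

/-- A `p`-group is split metacyclic if it is the internal semidirect product of a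
cyclic normal subgroup by a cyclic subgroup. -/
def IsSplitMetacyclic (H : Type*) [Group H] : Prop :=
  ∃ C K : Subgroup H, ∃ _ : C.Normal,
    IsCyclic C ∧ IsCyclic K ∧ C ⊓ K = ⊥ ∧ C ⊔ K = ⊤

/-- `Ω₁(S)`: the subgroup generated by the elements of `S` of order dividing `p`. -/
def omega1 {G : Type*} [Group G] (p : ℕ) (S : Subgroup G) : Subgroup G :=
  Subgroup.closure {g : G | g ∈ S ∧ g ^ p = 1}

/-- `O^{p'}(H)`: the subgroup generated by the elements of `H` of `p`-power order. -/
def pResidual {G : Type*} [Group G] (p : ℕ) (H : Subgroup G) : Subgroup G :=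
  Subgroup.closure {g : G | g ∈ H ∧ ∃ n : ℕ, g ^ p ^ n = 1}

/-- `H` is a strongly `p`-embedded subgroup of `G`. -/
def IsStronglyPEmbedded {G : Type*} [Group G] (p : ℕ) (H : Subgroup G) : Prop :=
  p ∣ Nat.card H ∧ ∀ g : G, g ∉ H →
    ¬p ∣ Nat.card (H ⊓ Subgroup.map (MulAut.conj g).toMonoidHom H : Subgroup G)

/-- The product `g₁ ⋯ g_i` of the first `i` values of the sequence `g₁, g₂, …`. -/
def partialProd {G : Type*} [Group G] (gs : ℕ → G) (i : ℕ) : G :=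
  ((List.range i).map fun j => gs (j + 1)).prod

/-- The generators of the Grodal subgroup of `N_G(S)`. -/
def GrodalGenerators {G : Type*} [Group G] (p : ℕ) (S : Subgroup G) : Set G :=
  {g : G | g ∈ Subgroup.normalizer (S : Set G) ∧ ∃ n : ℕ, 1 ≤ n ∧ ∃ Q : ℕ → Subgroup G, ∃ gs : ℕ → G,
    (∀ i ≤ n, Q i ≠ ⊥ ∧ Q i ≤ S) ∧
    (∀ i, 1 ≤ i → i ≤ n → gs i ∈ pResidual p (Subgroup.normalizer (Q i : Set G))) ∧
    g = partialProd gs n ∧ Q 0 ≤ Q 1 ∧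
    (∀ i, 1 ≤ i → i ≤ n - 1 →
      ∀ x ∈ Q 0, (partialProd gs i)⁻¹ * x * partialProd gs i ∈ Q (i + 1))}

/-- The Grodal subgroup `R` of `N_G(S)`. -/
def grodalSubgroup {G : Type*} [Group G] (p : ℕ) (S : Subgroup G) : Subgroup G :=
  Subgroup.closure (GrodalGenerators p S)

lemma geom_p {p : ℕ} [Fact p.Prime] (hodd : Odd p) {r : ℤ} (hr : (p : ℤ) ∣ r - 1) :
    ∃ t : ℤ, ∑ i ∈ Finset.range p, r ^ i = p * (1 + p * t) := by
  obtain ⟨b, hb⟩ := hr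
  have h := odd_sq_dvd_geom_sum₂_sub (1 : ℤ) b hodd
  obtain ⟨t, ht⟩ := h
  refine ⟨t, ?_⟩
  have hr' : r = 1 + p * b := by linarith
  simp only [one_pow, mul_one] at ht
  rw [hr']
  linear_combination ht

lemma geom_pk {p : ℕ} [Fact p.Prime] (hodd : Odd p) {r : ℤ} (hr : (p : ℤ) ∣ r - 1) (k : ℕ) :
    ∃ t : ℤ, ∑ i ∈ Finset.range (p ^ k), r ^ i = p ^ k * (1 + p * t) := by
  induction k with
  | zero => exact ⟨0, by simp⟩
  | succ k ih =>
    obtain ⟨t, ht⟩ := ih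
    have hr2 : (p : ℤ) ∣ r ^ p ^ k - 1 := hr.trans (by simpa using sub_dvd_pow_sub_pow r 1 (p ^ k))
    obtain ⟨t', ht'⟩ := geom_p hodd hr2
    refine ⟨t + t' + p * t * t', ?_⟩
    have : ∀ n : ℕ, ∑ i ∈ Finset.range (p ^ k * n), r ^ i =
        (∑ i ∈ Finset.range (p ^ k), r ^ i) * ∑ i ∈ Finset.range n, (r ^ p ^ k) ^ i := by
      intro n
      induction n with
      | zero => simp
      | succ n ihn =>
        rw [Nat.mul_succ, Finset.sum_range_add, ihn, Finset.sum_range_succ, mul_add]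
        congr 1
        rw [Finset.sum_mul]
        refine Finset.sum_congr rfl fun i _ => ?_
        ring
    rw [pow_succ, this, ht, ht']
    ring

lemma conj_pow_eq {H : Type*} [Group H] {x w : H} {r : ℤ} (h : w * x * w⁻¹ = x ^ r) (k : ℕ) (a : ℤ) :
    w ^ k * x ^ a * (w ^ k)⁻¹ = x ^ (a * r ^ k) := by
  induction k generalizing a with
  | zero => simp
  | succ k ih =>
    have h1 : w * x ^ a * w⁻¹ = x ^ (a * r) := by
      rw [← conj_zpow, h, ← zpow_mul, mul_comm]
    calc w ^ (k+1) * x ^ a * (w ^ (k+1))⁻¹ = w ^ k * (w * x ^ a * w⁻¹) * (w ^ k)⁻¹ := by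
          rw [pow_succ]; group
      _ = _ := by rw [h1, ih]; congr 1; ring

lemma mul_pow_formula {H : Type*} [Group H] {x w : H} {r : ℤ} (h : w * x * w⁻¹ = x ^ r) (a : ℤ) (N : ℕ) :
    (x ^ a * w) ^ N = x ^ (a * ∑ i ∈ Finset.range N, r ^ i) * w ^ N := by
  induction N with
  | zero => simp
  | succ N ih =>
    rw [pow_succ, ih, Finset.sum_range_succ, mul_add, zpow_add, ← conj_pow_eq h N a, pow_succ]
    group

lemma pow_pk_sub_one {p : ℕ} [Fact p.Prime] (r : ℤ) (n : ℕ) : (p : ℤ) ∣ r ^ p ^ n - r := by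
  rw [← ZMod.intCast_zmod_eq_zero_iff_dvd]
  push_cast
  rw [ZMod.pow_card_pow, sub_self]

lemma exists_inv_mod {p : ℕ} [hp : Fact p.Prime] {u : ℤ} (hu : ¬ (p : ℤ) ∣ u) (c : ℤ) :
    ∃ v : ℤ, (p : ℤ) ∣ u * v - c := by
  have h : IsCoprime (p : ℤ) u :=
    (Nat.prime_iff_prime_int.mp hp.out).coprime_iff_not_dvd.mpr hu
  obtain ⟨a, b, hab⟩ := h
  exact ⟨b * c, -(a * c), by linear_combination c * hab⟩

lemma zpow_eq_of_dvd {H : Type*} [Group H] {z : H} {p : ℕ} (hz : z ^ p = 1) {a b : ℤ}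
    (h : (p : ℤ) ∣ a - b) : z ^ a = z ^ b := by
  obtain ⟨c, hc⟩ := h
  have : a = b + p * c := by linarith
  rw [this, zpow_add, zpow_mul, zpow_natCast, hz, one_zpow, mul_one]

lemma dvd_of_zpow {H : Type*} [Group H] {z : H} {p : ℕ} [hp : Fact p.Prime] (hz : z ^ p = 1)
    (hz1 : z ≠ 1) {a : ℤ} (h : z ^ a = 1) : (p : ℤ) ∣ a := by
  have := orderOf_eq_prime hz hz1
  rw [← this]; exact orderOf_dvd_iff_zpow_eq_one.mpr h

theorem struct_lemma {p : ℕ} [hp : Fact p.Prime] (hodd : Odd p) {H : Type*} [Group H] [Finite H]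
    (hH : IsPGroup p H) (hs : IsSplitMetacyclic H) (he : ∃ e : H, e ^ p = 1 ∧ ∃ s : H, e * s ≠ s * e) :
    ∃ x q z : H, ∃ M : ℕ, x ^ p ^ M = z ∧ z ≠ 1 ∧ z ^ p = 1 ∧ (∀ s, s * z = z * s) ∧
      q ^ p = 1 ∧ x⁻¹ * q * x = q * z ∧ (∀ s : H, s ^ p = 1 → ∃ i j : ℤ, s = q ^ i * z ^ j) ∧
      ∀ s : H, s * q = q * s → (x * s) ^ p ^ M = z := by
  obtain ⟨C, K, hC, hCc, hKc, hCK, hCK'⟩ := hs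
  obtain ⟨x, hx⟩ := Subgroup.isCyclic_iff_exists_zpowers_eq_top C |>.mp hCc
  obtain ⟨y, hy⟩ := Subgroup.isCyclic_iff_exists_zpowers_eq_top K |>.mp hKc
  have hp0 : (p : ℤ) ≠ 0 := by exact_mod_cast hp.out.ne_zero
  have hpp := Nat.prime_iff_prime_int.mp hp.out
  obtain ⟨m', hm'⟩ := IsPGroup.iff_orderOf.mp hH x
  obtain ⟨n', hn'⟩ := IsPGroup.iff_orderOf.mp hH y
  have rep : ∀ s : H, ∃ a b : ℤ, s = x ^ a * y ^ b := by
    intro s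
    have : s ∈ C ⊔ K := by rw [hCK']; trivial
    rw [← SetLike.mem_coe, Subgroup.normal_mul] at this
    obtain ⟨c, hc, k, hk, rfl⟩ := this
    rw [← hx] at hc; rw [← hy] at hk
    obtain ⟨a, rfl⟩ := hc
    obtain ⟨b, rfl⟩ := hk
    exact ⟨a, b, rfl⟩
  have disj : ∀ a b : ℤ, x ^ a * y ^ b = 1 → x ^ a = 1 ∧ y ^ b = 1 := by
    intro a b h
    have h1 : x ^ a ∈ C := by rw [← hx]; exact ⟨a, rfl⟩
    have h2 : x ^ a ∈ K := by rw [← hy]; exact ⟨-b, by rw [eq_inv_of_mul_eq_one_left h]; group⟩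
    have h3 : x ^ a ∈ C ⊓ K := ⟨h1, h2⟩
    rw [hCK, Subgroup.mem_bot] at h3
    exact ⟨h3, by rw [h3, one_mul] at h; exact h⟩
  have hx1 : x ≠ 1 := by
    rintro rfl
    obtain ⟨e, -, s, hes⟩ := he
    obtain ⟨a, b, rfl⟩ := rep e
    obtain ⟨a', b', rfl⟩ := rep s
    apply hes
    simp only [one_zpow, one_mul]
    rw [← zpow_add, ← zpow_add, add_comm]
  obtain ⟨M, rfl⟩ : ∃ M, m' = M + 1 := Nat.exists_eq_succ_of_ne_zero (by
    rintro rfl; apply hx1; simpa using hm')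
  have xdvd : ∀ a : ℤ, x ^ a = 1 ↔ (p : ℤ) ^ (M + 1) ∣ a := by
    intro a; rw [← orderOf_dvd_iff_zpow_eq_one, hm']; push_cast; rfl
  have ydvd : ∀ a : ℤ, y ^ a = 1 ↔ (p : ℤ) ^ n' ∣ a := by
    intro a; rw [← orderOf_dvd_iff_zpow_eq_one, hn']; push_cast; rfl
  -- conjugation
  have cj : ∀ w : H, ∃ r : ℤ, w * x * w⁻¹ = x ^ r ∧ (p : ℤ) ∣ r - 1 := by
    intro w
    have h1 : w * x * w⁻¹ ∈ C := hC.conj_mem _ (by rw [← hx]; exact mem_zpowers x) w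
    rw [← hx] at h1
    obtain ⟨r, hr⟩ := h1
    simp only at hr
    refine ⟨r, hr.symm, ?_⟩
    obtain ⟨k, hk⟩ := hH w
    have h2 := conj_pow_eq hr.symm (p ^ k) 1
    rw [hk] at h2
    have h3 : x ^ (r ^ p ^ k - 1) = 1 := by
      rw [zpow_sub]; simp at h2; rw [← h2]; simp
    rw [xdvd] at h3
    have h4 : (p : ℤ) ∣ r ^ p ^ k - 1 := (dvd_pow_self _ (Nat.succ_ne_zero M)).trans h3
    have h5 := pow_pk_sub_one (p := p) r k
    have := dvd_sub h4 h5
    simpa using this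
  set z := x ^ p ^ M with hz
  have zz : ∀ a : ℤ, z ^ a = x ^ ((p : ℤ) ^ M * a) := by
    intro a; rw [hz, ← zpow_natCast, ← zpow_mul]; push_cast; rfl
  have hz1 : z ≠ 1 := by
    have : z = x ^ ((p : ℤ) ^ M) := by simpa using zz 1
    rw [this, Ne, xdvd, pow_succ]
    intro h
    have h0 : (p : ℤ) ^ M ≠ 0 := pow_ne_zero _ hp0
    have := (mul_dvd_mul_iff_left h0).mp (by simpa using h : (p : ℤ) ^ M * p ∣ p ^ M * 1)
    exact hpp.not_dvd_one this
  have hzp : z ^ p = 1 := by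
    rw [hz, ← pow_mul, ← pow_succ, ← hm', pow_orderOf_eq_one]
  have hzc : ∀ s, s * z = z * s := by
    intro s
    obtain ⟨r, hr, hr1⟩ := cj s
    have : s * z * s⁻¹ = z := by
      rw [hz, ← conj_pow, hr, ← zpow_natCast, ← zpow_mul, mul_comm, zpow_mul, zpow_natCast, ← hz]
      simpa using zpow_eq_of_dvd hzp hr1
    rw [mul_inv_eq_iff_eq_mul] at this
    exact this
  -- elements of order p
  have ordp : ∀ a b : ℤ, (x ^ a * y ^ b) ^ p = 1 → (∃ j : ℤ, x ^ a = z ^ j) ∧ (y ^ b) ^ p = 1 := by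
    intro a b h
    obtain ⟨r, hr, hr1⟩ := cj (y ^ b)
    rw [mul_pow_formula hr, ← zpow_natCast, ← zpow_mul] at h
    obtain ⟨h1, h2⟩ := disj _ _ h
    refine ⟨?_, by rw [← zpow_natCast, ← zpow_mul]; exact h2⟩
    obtain ⟨t, ht⟩ := geom_p hodd hr1
    rw [ht, xdvd, pow_succ, show a * (p * (1 + p * t)) = (a * (1 + p * t)) * p by ring,
      mul_dvd_mul_iff_right hp0] at h1
    have hcop : IsCoprime ((p : ℤ) ^ M) (1 + p * t) := by
      apply IsCoprime.pow_left
      exact ⟨-t, 1, by ring⟩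
    obtain ⟨j, hj⟩ := hcop.dvd_of_dvd_mul_right h1
    exact ⟨j, by rw [zz, hj]⟩
  obtain ⟨e, hep, s, hes⟩ := he
  obtain ⟨a, b, rfl⟩ := rep e
  obtain ⟨⟨j, hj⟩, hyb⟩ := ordp a b hep
  set w := y ^ b with hw
  have hwx : w * x ≠ x * w := by
    intro hc
    apply hes
    obtain ⟨a', b', rfl⟩ := rep s
    have c1 : Commute w x := hc
    have c2 : Commute w y := (Commute.refl y).zpow_left b
    have c3 : Commute (z ^ j) (x ^ a' * y ^ b') := Commute.zpow_left (hzc _).symm j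
    rw [hj]
    exact c3.mul_left ((c1.zpow_right _).mul_right (c2.zpow_right _))
  have hw1 : w ≠ 1 := by rintro h; rw [h] at hwx; simp at hwx
  have hbp : ¬ (p : ℤ) ^ n' ∣ b := by rw [← ydvd]; exact hw1
  -- b = p^(n'-1) c
  obtain ⟨n, rfl⟩ : ∃ n, n' = n + 1 := Nat.exists_eq_succ_of_ne_zero (by
    rintro rfl; simp at hbp)
  have ydvd' : ∀ b : ℤ, (y ^ b) ^ p = 1 → (p : ℤ) ^ n ∣ b := by
    intro b h
    rw [← zpow_natCast, ← zpow_mul, ydvd, pow_succ, mul_dvd_mul_iff_right hp0] at h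
    exact h
  obtain ⟨c, hc⟩ := ydvd' b hyb
  have hpc : ¬ (p : ℤ) ∣ c := by
    intro h; apply hbp; rw [hc, pow_succ]; exact mul_dvd_mul_left _ h
  -- action of w
  obtain ⟨r, hr, hr1⟩ := cj w
  obtain ⟨t, ht⟩ := geom_p hodd hr1
  have hrM : (p : ℤ) ^ M ∣ r - 1 := by
    have h2 := conj_pow_eq hr p 1
    rw [hyb] at h2
    have h3 : x ^ (r ^ p - 1) = 1 := by
      rw [zpow_sub]; simp at h2; rw [← h2]; simp
    rw [xdvd, ← mul_geom_sum, ht, pow_succ,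
      show (r - 1) * (p * (1 + p * t)) = ((r - 1) * (1 + p * t)) * p by ring,
      mul_dvd_mul_iff_right hp0] at h3
    have hcop : IsCoprime ((p : ℤ) ^ M) (1 + p * t) := by
      apply IsCoprime.pow_left
      exact ⟨-t, 1, by ring⟩
    exact hcop.dvd_of_dvd_mul_right h3
  obtain ⟨u, hu⟩ := hrM
  have hwxz : w * x * w⁻¹ = x * z ^ u := by
    rw [hr, zz, ← hu, ← zpow_one_add]; congr 1; ring
  have hpu : ¬ (p : ℤ) ∣ u := by
    intro h
    apply hwx
    have : z ^ u = 1 := by simpa using zpow_eq_of_dvd hzp (show (p : ℤ) ∣ u - 0 by simpa using h)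
    rw [this, mul_one, mul_inv_eq_iff_eq_mul] at hwxz
    exact hwxz
  obtain ⟨v, hv⟩ := exists_inv_mod hpu 1
  have hact : x⁻¹ * w * x = w * z ^ u := by
    have h1 : w * x = x * z ^ u * w := by rw [← hwxz]; group
    have h2 : Commute (z ^ u) w := Commute.zpow_left (hzc _).symm u
    rw [mul_assoc, h1, ← h2.eq]; group
  have hq : x⁻¹ * w ^ v * x = w ^ v * z := by
    have h2 : Commute w (z ^ u) := (Commute.zpow_left (hzc _).symm u).symm
    have h3 : (x⁻¹ * w * x⁻¹⁻¹) ^ v = x⁻¹ * w ^ v * x⁻¹⁻¹ := conj_zpow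
    rw [inv_inv] at h3
    rw [← h3, hact, h2.mul_zpow, ← zpow_mul z, zpow_eq_of_dvd hzp hv, zpow_one]
  have hpv : ¬ (p : ℤ) ∣ v := by
    intro h
    have := dvd_sub (h.mul_left u) hv
    rw [sub_sub_cancel] at this
    exact hpp.not_dvd_one this
  have hyM : y ^ p ^ M = 1 := by
    obtain ⟨r', hr', hr1'⟩ := cj y
    have hcomm : Commute (y ^ p ^ M) x := by
      have h1 := conj_pow_eq hr' (p ^ M) 1
      obtain ⟨t', ht'⟩ := geom_pk hodd hr1' M
      have h2 : x ^ (r' ^ p ^ M - 1) = 1 := by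
        rw [xdvd, ← mul_geom_sum, ht']
        obtain ⟨k, hk⟩ := hr1'
        rw [hk, pow_succ]
        exact ⟨k * (1 + p * t'), by ring⟩
      rw [zpow_sub, mul_inv_eq_one] at h2
      simp only [one_mul] at h1
      rw [h2, zpow_one, mul_inv_eq_iff_eq_mul] at h1
      exact h1
    by_contra hne
    have hlt : M ≤ n := by
      by_contra hlt
      push Not at hlt
      apply hne
      have := (ydvd ((p : ℤ) ^ M)).mpr (pow_dvd_pow _ hlt)
      rw [← this, ← zpow_natCast]; push_cast; rfl
    apply hwx
    obtain ⟨d, rfl⟩ := Nat.exists_eq_add_of_le hlt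
    have : w = (y ^ p ^ M) ^ ((p : ℤ) ^ d * c) := by
      rw [hw, ← zpow_natCast, ← zpow_mul, hc]; congr 1; push_cast; ring
    rw [this]
    exact hcomm.zpow_left _
  refine ⟨x, w ^ v, z, M, hz.symm, hz1, hzp, hzc, ?_, hq, ?_, ?_⟩
  · rw [← zpow_natCast, ← zpow_mul, mul_comm, zpow_mul, zpow_natCast, hyb, one_zpow]
  · intro s hs
    obtain ⟨a', b', rfl⟩ := rep s
    obtain ⟨⟨j', hj'⟩, hb'⟩ := ordp a' b' hs
    obtain ⟨c', hc'⟩ := ydvd' b' hb'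
    obtain ⟨i, hi⟩ := exists_inv_mod (show ¬ (p : ℤ) ∣ c * v from
      fun h => (hpp.dvd_or_dvd h).elim hpc hpv) c'
    refine ⟨i, j', ?_⟩
    have e1 : (w ^ v) ^ i = y ^ b' := by
      have : y ^ ((p : ℤ) ^ n * (c * v * i - c')) = 1 := by
        rw [ydvd, pow_succ]; exact mul_dvd_mul_left _ hi
      rw [hw, ← zpow_mul, ← zpow_mul, hc, hc', ← mul_inv_eq_one, ← zpow_neg, ← zpow_add, ← this]
      congr 1; ring
    rw [e1, hj']
    exact Commute.zpow_left (hzc _).symm j'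
  · intro s hs
    obtain ⟨a', b', rfl⟩ := rep s
    have hpa : (p : ℤ) ∣ a' := by
      have c1 : Commute (y ^ b') (w ^ v) := ((Commute.refl y).zpow_zpow b' b).zpow_right v
      have c2 : Commute (x ^ a' * y ^ b') (w ^ v) := hs
      have c3 : Commute (x ^ a') (w ^ v) := by
        have := c2.mul_left (c1.inv_left)
        simpa using this
      have h4 : (w ^ v) * x * (w ^ v)⁻¹ = x * z := by
        have h5 : Commute (w ^ v) z := hzc _
        have h1 : w ^ v * x = x * (w ^ v * z) := by rw [← hq]; group
        rw [h1, h5.eq]; group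
      have h6 : (w ^ v) * x ^ a' * (w ^ v)⁻¹ = x ^ a' * z ^ a' := by
        rw [← conj_zpow, h4, Commute.mul_zpow (hzc x)]
      rw [← c3.eq] at h6
      simp at h6
      exact dvd_of_zpow hzp hz1 h6
    obtain ⟨r', hr', hr1'⟩ := cj (y ^ b')
    obtain ⟨t', ht'⟩ := geom_pk hodd hr1' M
    rw [← mul_assoc, ← zpow_one_add, mul_pow_formula hr', ht']
    have : (y ^ b') ^ p ^ M = 1 := by
      rw [← zpow_natCast, ← zpow_mul, mul_comm, zpow_mul, zpow_natCast, hyM, one_zpow]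
    rw [this, mul_one, show (1 + a') * ((p : ℤ) ^ M * (1 + p * t')) =
      p ^ M * ((1 + a') * (1 + p * t')) by ring, ← zz]
    obtain ⟨k, hk⟩ := hpa
    have := zpow_eq_of_dvd hzp (show (p : ℤ) ∣ (1 + a') * (1 + p * t') - 1 from
      ⟨k + t' + a' * t', by rw [hk]; ring⟩)
    rw [this, zpow_one]

set_option linter.unusedSectionVars false
set_option linter.unusedVariables false

lemma conj_shift {G : Type*} [Group G] {x a c : G} (h : x⁻¹ * a * x = a * c) (hc : c * x = x * c)
    (k : ℤ) : (x ^ k)⁻¹ * a * x ^ k = a * c ^ k := by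
  have h1 : a⁻¹ * x⁻¹ * a⁻¹⁻¹ = c * x⁻¹ := by
    have h0 : x⁻¹ * a = a * c * x⁻¹ := by rw [← h]; group
    rw [inv_inv, mul_assoc, h0]; group
  have hc' : Commute c x⁻¹ := Commute.inv_right hc
  have h2 : a⁻¹ * x⁻¹ ^ k * a⁻¹⁻¹ = c ^ k * x⁻¹ ^ k := by
    rw [← conj_zpow, h1, hc'.mul_zpow]
  rw [inv_inv, inv_zpow, mul_assoc, inv_mul_eq_iff_eq_mul] at h2
  rw [h2]; group

lemma conj_qz {G : Type*} [Group G] (g q z : G) (i j : ℤ) :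
    g * (q ^ i * z ^ j) * g⁻¹ = (g * q * g⁻¹) ^ i * (g * z * g⁻¹) ^ j := by
  rw [conj_zpow, conj_zpow]; group

lemma inv_exists {G : Type*} [Group G] {z z' U V : G} (hc : z * z' = z' * z)
    (h1 : U * z * U⁻¹ = z) (h2 : U * z' * U⁻¹ = z' * z)
    (h3 : V * z * V⁻¹ = z * z'⁻¹) (h4 : V * z' * V⁻¹ = z') :
    ∃ t : G, t * z * t⁻¹ = z⁻¹ ∧ t * z' * t⁻¹ = z'⁻¹ := by
  have hc' : z' * z * z'⁻¹ = z := by rw [← hc]; group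
  have e1 : (U * V * U) * z * (U * V * U)⁻¹ = z'⁻¹ := by
    calc _ = U * (V * (U * z * U⁻¹) * V⁻¹) * U⁻¹ := by group
      _ = U * (z * z'⁻¹) * U⁻¹ := by rw [h1, h3]
      _ = (U * z * U⁻¹) * (U * z' * U⁻¹)⁻¹ := by group
      _ = _ := by rw [h1, h2]; group
  have e2 : (U * V * U) * z' * (U * V * U)⁻¹ = z := by
    calc _ = U * (V * (U * z' * U⁻¹) * V⁻¹) * U⁻¹ := by group
      _ = U * ((V * z' * V⁻¹) * (V * z * V⁻¹)) * U⁻¹ := by rw [h2]; group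
      _ = U * (z' * z * z'⁻¹) * U⁻¹ := by rw [h3, h4]; group
      _ = _ := by rw [hc', h1]
  set T := U * V * U
  refine ⟨T * T, ?_, ?_⟩
  · calc _ = T * (T * z * T⁻¹) * T⁻¹ := by group
      _ = (T * z' * T⁻¹)⁻¹ := by rw [e1]; group
      _ = _ := by rw [e2]
  · calc _ = T * (T * z' * T⁻¹) * T⁻¹ := by group
      _ = _ := by rw [e2, e1]

lemma pel_comm {p : ℕ} [Fact p.Prime] {G : Type*} [Group G] {k a : G} {n : ℕ} (hk : k ^ p ^ n = 1)
    (ha : a ^ p = 1) (h : k * a * k⁻¹ ∈ zpowers a) : k * a * k⁻¹ = a := by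
  obtain ⟨r, hr⟩ := h
  simp only at hr
  have h1 := conj_pow_eq hr.symm (p ^ n) 1
  rw [hk] at h1
  simp only [one_mul, inv_one, mul_one, zpow_one] at h1
  rw [← hr, ← zpow_eq_of_dvd ha (pow_pk_sub_one r n), ← h1]

lemma sylow_conj {p : ℕ} [Fact p.Prime] {G : Type*} [Group G] [Finite G] (S : Sylow p G)
    (L : Subgroup G) (hSL : (S : Subgroup G) ≤ L) {t : G} (htL : t ∈ L) {k : ℕ} (ht : t ^ p ^ k = 1) :
    ∃ l ∈ L, l⁻¹ * t * l ∈ S := by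
  let t' : L := ⟨t, htL⟩
  have hP : IsPGroup p (zpowers t') := by
    rintro ⟨_, j, rfl⟩
    refine ⟨k, ?_⟩
    ext
    simp only [t', OneMemClass.coe_one, SubgroupClass.coe_zpow, SubgroupClass.coe_pow]
    rw [← zpow_natCast, ← zpow_mul, mul_comm, zpow_mul, zpow_natCast, ht, one_zpow]
  obtain ⟨P, hPP⟩ := hP.exists_le_sylow
  obtain ⟨l, hl⟩ := MulAction.exists_smul_eq L (S.subtype hSL) P
  refine ⟨l, l.2, ?_⟩
  have : t' ∈ (P : Subgroup L) := hPP (mem_zpowers t')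
  rw [← hl, Sylow.coe_subgroup_smul, Subgroup.mem_pointwise_smul_iff_inv_smul_mem] at this
  rw [← map_inv, MulAut.smul_def, MulAut.conj_apply, Sylow.coe_subtype, mem_subgroupOf] at this
  have h2 : (l : G)⁻¹ * t * l ∈ (S : Subgroup G) := by simpa [t'] using this
  exact h2

structure Cfg {G : Type*} [Group G] (p : ℕ) (S : Subgroup G) (x q z : G) (M : ℕ) : Prop where
  hx : x ∈ S
  hq : q ∈ S
  hz : z ∈ S
  xM : x ^ p ^ M = z
  z1 : z ≠ 1
  zp : z ^ p = 1
  zc : ∀ s ∈ S, s * z = z * s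
  qp : q ^ p = 1
  act : x⁻¹ * q * x = q * z
  gen : ∀ s ∈ S, s ^ p = 1 → ∃ i j : ℤ, s = q ^ i * z ^ j
  sh : ∀ s ∈ S, s * q = q * s → (x * s) ^ p ^ M = z

namespace Cfg
variable {G : Type*} [Group G] {p : ℕ} [hp : Fact p.Prime] {S : Subgroup G} {x q z : G} {M : ℕ}

lemma qz (c : Cfg p S x q z M) : Commute q z := c.zc q c.hq

lemma memE (c : Cfg p S x q z M) {e : G} : e ∈ omega1 p S ↔ ∃ i j : ℤ, e = q ^ i * z ^ j := by
  constructor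
  · intro h
    induction h using Subgroup.closure_induction with
    | mem y hy => exact c.gen y hy.1 hy.2
    | one => exact ⟨0, 0, by simp⟩
    | mul a b _ _ ha hb =>
      obtain ⟨i, j, rfl⟩ := ha
      obtain ⟨k, l, rfl⟩ := hb
      refine ⟨i + k, j + l, ?_⟩
      rw [zpow_add, zpow_add]
      have := (c.qz.zpow_zpow k j).eq
      rw [mul_assoc, ← mul_assoc (z ^ j), ← this]; group
    | inv a _ ha =>
      obtain ⟨i, j, rfl⟩ := ha
      refine ⟨-i, -j, ?_⟩
      rw [(c.qz.zpow_zpow i j).eq]; group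
  · rintro ⟨i, j, rfl⟩
    have h1 : q ∈ omega1 p S := Subgroup.subset_closure ⟨c.hq, c.qp⟩
    have h2 : z ∈ omega1 p S := Subgroup.subset_closure ⟨c.hz, c.zp⟩
    exact mul_mem (zpow_mem h1 _) (zpow_mem h2 _)

lemma ES (_c : Cfg p S x q z M) : omega1 p S ≤ S := (closure_le _).mpr fun _ h => h.1

lemma zE (c : Cfg p S x q z M) : z ∈ omega1 p S := c.memE.mpr ⟨0, 1, by simp⟩
lemma qE (c : Cfg p S x q z M) : q ∈ omega1 p S := c.memE.mpr ⟨1, 0, by simp⟩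

lemma powE (c : Cfg p S x q z M) {e : G} (h : e ∈ omega1 p S) : e ^ p = 1 := by
  obtain ⟨i, j, rfl⟩ := c.memE.mp h
  rw [(c.qz.zpow_zpow i j).mul_pow, ← zpow_natCast, ← zpow_natCast, ← zpow_mul, ← zpow_mul,
    mul_comm i, mul_comm j, zpow_mul, zpow_mul, zpow_natCast, zpow_natCast, c.qp, c.zp]
  simp

lemma commE (c : Cfg p S x q z M) {e f : G} (h : e ∈ omega1 p S) (h' : f ∈ omega1 p S) :
    Commute e f := by
  obtain ⟨i, j, rfl⟩ := c.memE.mp h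
  obtain ⟨k, l, rfl⟩ := c.memE.mp h'
  have := c.qz
  exact (((Commute.refl q).zpow_zpow _ _).mul_right (c.qz.zpow_zpow _ _)).mul_left
    ((c.qz.symm.zpow_zpow _ _).mul_right ((Commute.refl z).zpow_zpow _ _))

lemma shift (c : Cfg p S x q z M) (i j k : ℤ) :
    (x ^ k)⁻¹ * (q ^ i * z ^ j) * x ^ k = q ^ i * z ^ j * z ^ (i * k) := by
  rw [zpow_mul]
  apply conj_shift
  · have h := conj_qz x⁻¹ q z i j
    rw [inv_inv, c.act] at h
    rw [h]
    have h2 : x⁻¹ * z * x = z := by rw [mul_assoc, ← c.zc x c.hx]; group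
    rw [h2, c.qz.mul_zpow, mul_assoc, mul_assoc, ((Commute.refl z).zpow_zpow _ _).eq]
  · exact ((show Commute x z from c.zc x c.hx).zpow_right i).symm

lemma dvd_of_mem (c : Cfg p S x q z M) {i j : ℤ} (h : q ^ i * z ^ j ∈ zpowers z) : (p : ℤ) ∣ i := by
  obtain ⟨k, hk⟩ := h
  simp only at hk
  have h1 := c.shift i j 1
  rw [← hk] at h1
  have h2 : Commute x (z ^ k) := (show Commute x z from c.zc x c.hx).zpow_right k
  rw [zpow_one, mul_assoc, ← h2.eq, inv_mul_cancel_left] at h1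
  simp at h1
  exact dvd_of_zpow c.zp c.z1 h1

lemma mem_of_dvd (c : Cfg p S x q z M) {i j : ℤ} (h : (p : ℤ) ∣ i) : q ^ i * z ^ j ∈ zpowers z := by
  have : q ^ i = q ^ (0 : ℤ) := zpow_eq_of_dvd c.qp (by simpa using h)
  rw [this]; exact ⟨j, by simp⟩

/-- unitriangular group -/
def U (c : Cfg p S x q z M) : Subgroup G where
  carrier := {g | g * z * g⁻¹ = z ∧ ∃ j : ℤ, g * q * g⁻¹ = q * z ^ j}
  one_mem' := ⟨by simp, 0, by simp⟩
  mul_mem' := by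
    rintro a b ⟨ha, i, hi⟩ ⟨hb, j, hj⟩
    refine ⟨?_, i + j, ?_⟩
    · calc _ = a * (b * z * b⁻¹) * a⁻¹ := by group
        _ = _ := by rw [hb, ha]
    · calc _ = a * (b * q * b⁻¹) * a⁻¹ := by group
        _ = (a * q * a⁻¹) * (a * z * a⁻¹) ^ j := by rw [hj, conj_zpow]; group
        _ = _ := by rw [ha, hi, zpow_add]; group
  inv_mem' := by
    rintro a ⟨ha, i, hi⟩
    have ha' : a⁻¹ * z * a = z := by
      nth_rewrite 1 [← ha]; group
    refine ⟨by rw [inv_inv]; exact ha', -i, ?_⟩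
    have : a * (q * z ^ (-i)) * a⁻¹ = q := by
      calc _ = (a * q * a⁻¹) * (a * z * a⁻¹) ^ (-i) := by rw [conj_zpow]; group
        _ = _ := by rw [hi, ha]; group
    nth_rewrite 1 [← this]; group

lemma pel_U (c : Cfg p S x q z M) {k : G} {n : ℕ} (hk : k ^ p ^ n = 1) (h1 : k * z * k⁻¹ ∈ zpowers z)
    (h2 : k * q * k⁻¹ ∈ omega1 p S) : k ∈ c.U := by
  have hz := pel_comm hk c.zp h1
  refine ⟨hz, ?_⟩
  obtain ⟨i, j, hij⟩ := c.memE.mp h2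
  refine ⟨j, ?_⟩
  have key : ∀ N : ℕ, ∃ l : ℤ, k ^ N * q * (k ^ N)⁻¹ = q ^ (i ^ N) * z ^ l := by
    intro N
    induction N with
    | zero => exact ⟨0, by simp⟩
    | succ N ih =>
      obtain ⟨l, hl⟩ := ih
      refine ⟨j * i ^ N + l, ?_⟩
      calc _ = k * (k ^ N * q * (k ^ N)⁻¹) * k⁻¹ := by rw [pow_succ']; group
        _ = (k * q * k⁻¹) ^ (i ^ N) * (k * z * k⁻¹) ^ l := by rw [hl, conj_qz]
        _ = _ := by
          rw [hij, hz, (c.qz.zpow_zpow _ _).mul_zpow, ← zpow_mul, ← zpow_mul, zpow_add, mul_assoc,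
            pow_succ']
  obtain ⟨l, hl⟩ := key (p ^ n)
  rw [hk] at hl
  simp only [one_mul, inv_one, mul_one] at hl
  have h3 : (p : ℤ) ∣ i ^ p ^ n - 1 := by
    apply c.dvd_of_mem (j := 0)
    refine ⟨-l, ?_⟩
    simp only [zpow_neg, zpow_zero, mul_one]
    rw [(show i ^ p ^ n - 1 = (-1) + i ^ p ^ n by ring), zpow_add, zpow_neg_one, eq_inv_mul_iff_mul_eq]
    rw [hl]
    nth_rewrite 1 [hl]
    group
  have h4 := dvd_sub h3 (pow_pk_sub_one (p := p) i n)
  rw [hij, zpow_eq_of_dvd c.qp (show (p : ℤ) ∣ i - 1 by simpa using h4), zpow_one]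

lemma SU (c : Cfg p S x q z M) (hS : IsPGroup p S) : S ≤ c.U := by
  intro s hs
  obtain ⟨n, hn⟩ := hS ⟨s, hs⟩
  refine c.pel_U (n := n) (by simpa using congrArg Subtype.val hn) ?_ ?_
  · rw [c.zc s hs, mul_inv_cancel_right]; exact mem_zpowers z
  · apply Subgroup.subset_closure
    exact ⟨mul_mem (mul_mem hs c.hq) (inv_mem hs), by rw [conj_pow, c.qp]; simp⟩

end Cfg

lemma normE_normZ {G : Type*} [Group G] [Finite G] {p : ℕ} [hp : Fact p.Prime] (hodd : Odd p)
    {S : Sylow p G} {x q z : G} {M : ℕ} (c : Cfg p (S : Subgroup G) x q z M) {g : G}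
    (hg : g ∈ Subgroup.normalizer (omega1 p (S : Subgroup G) : Set G)) :
    g * z * g⁻¹ ∈ zpowers z := by
  by_contra hcon
  have hpp := Nat.prime_iff_prime_int.mp hp.out
  have hz'E : g * z * g⁻¹ ∈ omega1 p (S : Subgroup G) := (mem_normalizer_iff.mp hg z).mp c.zE
  obtain ⟨i, j, hij⟩ := c.memE.mp hz'E
  have hi : ¬ (p : ℤ) ∣ i := fun h => hcon (by rw [hij]; exact c.mem_of_dvd h)
  have hyE : g⁻¹ * z * g ∈ omega1 p (S : Subgroup G) := (mem_normalizer_iff''.mp hg z).mp c.zE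
  obtain ⟨i', j', hij'⟩ := c.memE.mp hyE
  set z' := g * z * g⁻¹ with hz'
  clear_value z'
  have hz'p : z' ^ p = 1 := c.powE hz'E
  have hi' : ¬ (p : ℤ) ∣ i' := by
    intro h
    have h1 : g⁻¹ * z * g ∈ zpowers z := by rw [hij']; exact c.mem_of_dvd h
    obtain ⟨k, hk⟩ := h1
    simp only at hk
    have h2 : z = z' ^ k := by rw [hz', conj_zpow, hk]; group
    have hk : ¬ (p : ℤ) ∣ k := by
      intro h
      apply c.z1
      rw [h2]
      simpa using zpow_eq_of_dvd hz'p (show (p : ℤ) ∣ k - 0 by simpa using h)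
    obtain ⟨v, hv⟩ := exists_inv_mod hk 1
    apply hcon
    refine ⟨v, ?_⟩
    simp only
    rw [h2, ← zpow_mul, zpow_eq_of_dvd hz'p hv, zpow_one]
  have hcomm : Commute z z' := c.commE c.zE hz'E
  obtain ⟨k, hk⟩ := exists_inv_mod hi 1
  obtain ⟨l, hl⟩ := exists_inv_mod hi' (-1)
  have hxz : Commute x z := c.zc x c.hx
  obtain ⟨t, ht1, ht2⟩ := inv_exists (z := z) (z' := z') (U := (x ^ k)⁻¹) (V := g * (x ^ l)⁻¹ * g⁻¹) hcomm.eq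
    (by rw [((hxz.zpow_left k).inv_left).eq]; group)
    (by rw [inv_inv, hij, c.shift, zpow_eq_of_dvd c.zp hk, zpow_one])
    (by
      have h1 := c.shift i' j' l
      rw [← hij', zpow_eq_of_dvd c.zp hl] at h1
      calc _ = g * ((x ^ l)⁻¹ * (g⁻¹ * z * g) * x ^ l) * g⁻¹ := by group
        _ = _ := by rw [h1, hz']; group)
    (by
      calc _ = g * ((x ^ l)⁻¹ * z * x ^ l) * g⁻¹ := by rw [hz']; group
        _ = _ := by rw [((hxz.zpow_left l).inv_left).eq, hz']; group)
  have ht3 : t * q * t⁻¹ = q⁻¹ := by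
    have h1 : q = (z' * z ^ (-j)) ^ k := by
      rw [hij, zpow_neg, mul_inv_cancel_right, ← zpow_mul, zpow_eq_of_dvd c.qp hk, zpow_one]
    have h2 : t * (z' * z ^ (-j)) * t⁻¹ = (z' * z ^ (-j))⁻¹ := by
      calc _ = (t * z' * t⁻¹) * (t * z * t⁻¹) ^ (-j) := by rw [conj_zpow]; group
        _ = z'⁻¹ * (z ^ (-j))⁻¹ := by rw [ht1, ht2]; group
        _ = _ := by rw [mul_inv_rev, (hcomm.symm.zpow_right (-j)).inv_inv.eq]
    rw [h1, ← conj_zpow, h2, inv_zpow]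
  have hxq : x * q * x⁻¹ = q * z⁻¹ := by
    have h1 : x * (x⁻¹ * q * x) * x⁻¹ = x * q * x⁻¹ * (x * z * x⁻¹) := by rw [c.act]; group
    rw [hxz.eq, mul_inv_cancel_right] at h1
    rw [eq_mul_inv_iff_mul_eq, ← h1]; group
  have hti : t⁻¹ * q * t = q⁻¹ := by
    rw [← inv_inj, inv_inv, ← mul_right_inj t, ← mul_left_inj t⁻¹, ht3]
    group
  have htz : t⁻¹ * z * t = z⁻¹ := by
    rw [← inv_inj, inv_inv, ← mul_right_inj t, ← mul_left_inj t⁻¹, ht1]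
    group
  have hxU : (t * x * t⁻¹) * q * (t * x * t⁻¹)⁻¹ = q * z⁻¹ := by
    calc _ = t * (x * (t⁻¹ * q * t) * x⁻¹) * t⁻¹ := by group
      _ = t * (x * q * x⁻¹)⁻¹ * t⁻¹ := by rw [hti]; group
      _ = (t * z * t⁻¹) * (t * q * t⁻¹)⁻¹ := by rw [hxq]; group
      _ = z⁻¹ * q := by rw [ht1, ht3, inv_inv]
      _ = _ := c.qz.inv_right.symm.eq
  have hxU2 : (t * x * t⁻¹) * z * (t * x * t⁻¹)⁻¹ = z := by
    calc _ = t * (x * (t⁻¹ * z * t) * x⁻¹) * t⁻¹ := by group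
      _ = t * (x * z * x⁻¹)⁻¹ * t⁻¹ := by rw [htz]; group
      _ = (t * z * t⁻¹)⁻¹ := by rw [hxz.eq]; group
      _ = _ := by rw [ht1, inv_inv]
  obtain ⟨n, hn⟩ := S.isPGroup' ⟨x, c.hx⟩
  have hn' : x ^ p ^ n = 1 := by simpa using congrArg Subtype.val hn
  obtain ⟨l, hlU, hlS⟩ := sylow_conj S c.U (c.SU S.isPGroup') (t := t * x * t⁻¹)
    ⟨hxU2, -1, by rw [hxU, zpow_neg_one]⟩ (k := n) (by rw [conj_pow, hn']; simp)
  set s := l⁻¹ * (t * x * t⁻¹) * l with hs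
  obtain ⟨hlz, m, hlq⟩ := hlU
  have hlz' : l⁻¹ * z * l = z := by nth_rewrite 1 [← hlz]; group
  have hsq : s * q * s⁻¹ = q * z⁻¹ := by
    calc _ = l⁻¹ * ((t * x * t⁻¹) * (l * q * l⁻¹) * (t * x * t⁻¹)⁻¹) * l := by rw [hs]; group
      _ = l⁻¹ * (((t * x * t⁻¹) * q * (t * x * t⁻¹)⁻¹) * ((t * x * t⁻¹) * z * (t * x * t⁻¹)⁻¹) ^ m) * l := by
        rw [hlq, conj_zpow (a := t * x * t⁻¹)]; group
      _ = l⁻¹ * (q * z ^ m) * l * (l⁻¹ * z * l)⁻¹ := by rw [hxU, hxU2]; group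
      _ = _ := by rw [hlz', ← hlq]; group
  have h2 : (x * (x⁻¹ * s)) ^ p ^ M = z := by
    apply c.sh _ (mul_mem (inv_mem c.hx) hlS)
    rw [← mul_inv_eq_iff_eq_mul]
    calc _ = x⁻¹ * (s * q * s⁻¹) * x := by group
      _ = (x⁻¹ * q * x) * (x⁻¹ * z * x)⁻¹ := by rw [hsq]; group
      _ = q * z * (x⁻¹ * (z * x))⁻¹ := by rw [c.act]; group
      _ = _ := by rw [← hxz.eq]; group
  rw [mul_inv_cancel_left, hs] at h2
  have h3 : (l⁻¹ * (t * x * t⁻¹) * l) ^ p ^ M = l⁻¹ * (t * x ^ p ^ M * t⁻¹) * l := by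
    have := conj_pow (i := p ^ M) (a := l⁻¹) (b := t * x * t⁻¹)
    rw [inv_inv] at this
    rw [this, conj_pow]
  rw [h3, c.xM, ht1] at h2
  have h4 : z⁻¹ = z := by
    calc z⁻¹ = (l⁻¹ * z * l)⁻¹ := by rw [hlz']
      _ = l⁻¹ * z⁻¹ * l := by group
      _ = z := h2
  have h5 : z ^ (2 : ℤ) = 1 := by
    rw [zpow_two]; nth_rewrite 1 [← h4]; simp
  have h6 := dvd_of_zpow c.zp c.z1 h5
  have h7 : p ∣ 2 := by exact_mod_cast h6
  have := (Nat.prime_dvd_prime_iff_eq hp.out Nat.prime_two).mp h7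
  subst this
  exact absurd hodd (by decide)

section pres
variable {G : Type*} [Group G] {p : ℕ}

lemma pRes_le (H : Subgroup G) : pResidual p H ≤ H := (closure_le _).mpr fun _ h => h.1

lemma pRes_mono {H K : Subgroup G} (h : H ≤ K) : pResidual p H ≤ pResidual p K :=
  closure_mono fun _ hx => ⟨h hx.1, hx.2⟩

lemma pRes_of_pel {H K : Subgroup G} (h : ∀ g ∈ H, ∀ n : ℕ, g ^ p ^ n = 1 → g ∈ K) :
    pResidual p H ≤ pResidual p K :=
  closure_mono fun x hx => ⟨by obtain ⟨n, hn⟩ := hx.2; exact h x hx.1 n hn, hx.2⟩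

lemma le_pRes {S H : Subgroup G} (hS : IsPGroup p S) (h : S ≤ H) : S ≤ pResidual p H := by
  intro s hs
  obtain ⟨n, hn⟩ := hS ⟨s, hs⟩
  exact Subgroup.subset_closure ⟨h hs, n, by simpa using congrArg Subtype.val hn⟩

lemma pRes_conj {H K : Subgroup G} {k : G} (h : ∀ g ∈ H, k * g * k⁻¹ ∈ K) {g : G}
    (hg : g ∈ pResidual p H) : k * g * k⁻¹ ∈ pResidual p K := by
  induction hg using Subgroup.closure_induction with
  | mem y hy =>
    obtain ⟨n, hn⟩ := hy.2
    exact Subgroup.subset_closure ⟨h y hy.1, n, by rw [conj_pow, hn]; simp⟩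
  | one => simp
  | mul a b _ _ ha hb =>
    have : k * (a * b) * k⁻¹ = (k * a * k⁻¹) * (k * b * k⁻¹) := by group
    rw [this]; exact mul_mem ha hb
  | inv a _ ha =>
    have : k * a⁻¹ * k⁻¹ = (k * a * k⁻¹)⁻¹ := by group
    rw [this]; exact inv_mem ha

lemma partialProd_succ (gs : ℕ → G) (i : ℕ) :
    partialProd gs (i + 1) = partialProd gs i * gs (i + 1) := by
  simp [partialProd, List.range_succ]

lemma norm_omega (T : Subgroup G) :
    Subgroup.normalizer (T : Set G) ≤ Subgroup.normalizer (omega1 p T : Set G) := by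
  have key : ∀ g ∈ Subgroup.normalizer (T : Set G), ∀ h ∈ omega1 p T, g * h * g⁻¹ ∈ omega1 p T := by
    intro g hg h hh
    induction hh using Subgroup.closure_induction with
    | mem y hy =>
      exact Subgroup.subset_closure ⟨(mem_normalizer_iff.mp hg y).mp hy.1, by rw [conj_pow, hy.2]; simp⟩
    | one => simp
    | mul a b _ _ ha hb =>
      have : g * (a * b) * g⁻¹ = (g * a * g⁻¹) * (g * b * g⁻¹) := by group
      rw [this]; exact mul_mem ha hb
    | inv a _ ha =>
      have : g * a⁻¹ * g⁻¹ = (g * a * g⁻¹)⁻¹ := by group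
      rw [this]; exact inv_mem ha
  intro g hg
  rw [mem_normalizer_iff]
  intro h
  refine ⟨key g hg h, fun h2 => ?_⟩
  have := key g⁻¹ (inv_mem hg) _ h2
  rw [inv_inv] at this
  convert this using 1
  group

end pres

namespace Cfg
variable {G : Type*} [Group G] {p : ℕ} [hp : Fact p.Prime] {S : Subgroup G} {x q z : G} {M : ℕ}

lemma U_act (c : Cfg p S x q z M) {g e : G} (hg : g ∈ c.U) (he : e ∈ omega1 p S) :
    ∃ j : ℤ, g * e * g⁻¹ = e * z ^ j := by
  obtain ⟨i, k, rfl⟩ := c.memE.mp he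
  obtain ⟨hz, j, hj⟩ := hg
  refine ⟨j * i, ?_⟩
  rw [conj_qz, hz, hj, (c.qz.zpow_right j).mul_zpow, ← zpow_mul, mul_assoc, mul_assoc,
    ((Commute.refl z).zpow_zpow _ _).eq]

lemma trans (c : Cfg p S x q z M) {e : G} (he : e ∈ omega1 p S) (hez : e ∉ zpowers z) (j : ℤ) :
    ∃ s ∈ S, s⁻¹ * e * s = e * z ^ j := by
  obtain ⟨i, k, rfl⟩ := c.memE.mp he
  have hi : ¬ (p : ℤ) ∣ i := fun h => hez (c.mem_of_dvd h)
  obtain ⟨v, hv⟩ := exists_inv_mod hi j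
  exact ⟨x ^ v, zpow_mem c.hx v, by rw [c.shift, zpow_eq_of_dvd c.zp hv]⟩

lemma Zeq (c : Cfg p S x q z M) :
    omega1 p S ⊓ (S ⊓ Subgroup.centralizer (S : Set G)) = zpowers z := by
  apply le_antisymm
  · rintro e ⟨he, heS, hec⟩
    by_contra hez
    obtain ⟨s, hs, h⟩ := c.trans he hez 1
    have h1 := mem_centralizer_iff.mp hec s hs
    rw [mul_assoc, ← h1, inv_mul_cancel_left, zpow_one] at h
    exact c.z1 (by simpa using h)
  · rw [zpowers_le]
    exact ⟨c.zE, c.hz, mem_centralizer_iff.mpr fun s hs => c.zc s hs⟩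

lemma mul_zpow_notMem (c : Cfg p S x q z M) {e : G} (h : e ∉ zpowers z) (j : ℤ) :
    e * z ^ j ∉ zpowers z := by
  intro h2
  exact h ((Subgroup.mul_mem_cancel_right _ (zpow_mem (mem_zpowers z) j)).mp h2)

lemma zpow_mul_eq (c : Cfg p S x q z M) {a b : G} (ha : a ∈ omega1 p S) (haz : a ∉ zpowers z)
    (hb : b ∈ omega1 p S) : ∃ k j : ℤ, a ^ k = b * z ^ j := by
  obtain ⟨i, l, rfl⟩ := c.memE.mp ha
  obtain ⟨i', l', rfl⟩ := c.memE.mp hb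
  have hi : ¬ (p : ℤ) ∣ i := fun h => haz (c.mem_of_dvd h)
  obtain ⟨v, hv⟩ := exists_inv_mod hi i'
  refine ⟨v, l * v - l', ?_⟩
  rw [(c.qz.zpow_zpow _ _).mul_zpow, ← zpow_mul, ← zpow_mul, zpow_eq_of_dvd c.qp hv, mul_assoc,
    ← zpow_add]
  congr 2; ring

lemma cardE (c : Cfg p S x q z M) [Finite G] : Nat.card (omega1 p S) ≤ p ^ 2 := by
  have hf : Function.Surjective (fun t : zpowers q × zpowers z =>
      (⟨t.1 * t.2, mul_mem ((zpowers_le.mpr c.qE) t.1.2) ((zpowers_le.mpr c.zE) t.2.2)⟩ : omega1 p S)) := by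
    rintro ⟨e, he⟩
    obtain ⟨i, j, rfl⟩ := c.memE.mp he
    exact ⟨⟨⟨q ^ i, i, rfl⟩, ⟨z ^ j, j, rfl⟩⟩, rfl⟩
  have h := Nat.card_le_card_of_surjective _ hf
  rw [Nat.card_prod, Nat.card_zpowers, Nat.card_zpowers] at h
  have h1 : orderOf q ≤ p := Nat.le_of_dvd hp.out.pos (orderOf_dvd_of_pow_eq_one c.qp)
  have h2 : orderOf z ≤ p := Nat.le_of_dvd hp.out.pos (orderOf_dvd_of_pow_eq_one c.zp)
  calc _ ≤ _ := h
    _ ≤ p * p := Nat.mul_le_mul h1 h2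
    _ = _ := by ring

lemma classify (c : Cfg p S x q z M) [Finite G] (hS : IsPGroup p S) {T : Subgroup G} (hT : T ≤ S)
    {a g : G} (haT : a ∈ T) (haE : a ∈ omega1 p S) (ha1 : a ≠ 1)
    (hg : g ∈ pResidual p (Subgroup.normalizer (T : Set G))) :
    g ∈ pResidual p (Subgroup.normalizer (omega1 p S : Set G)) ∨
      g ∈ pResidual p (Subgroup.centralizer {a}) := by
  have hWE : omega1 p T ≤ omega1 p S := closure_mono fun _ h => ⟨hT h.1, h.2⟩
  have haW : a ∈ omega1 p T := Subgroup.subset_closure ⟨haT, c.powE haE⟩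
  have hg1 := pRes_mono (p := p) (norm_omega (p := p) T) hg
  by_cases hW : omega1 p T = omega1 p S
  · left; rwa [hW] at hg1
  right
  have hEp : IsPGroup p (omega1 p S) := hS.to_le c.ES
  obtain ⟨b, hb⟩ := IsPGroup.iff_card.mp hEp
  obtain ⟨d, hd⟩ := IsPGroup.iff_card.mp (hEp.to_le hWE)
  have hlt : Nat.card (omega1 p T) < Nat.card (omega1 p S) := by
    refine lt_of_le_of_ne (Subgroup.card_le_of_le hWE) fun h => hW ?_
    exact Subgroup.eq_of_le_of_card_ge hWE h.ge
  have hp1 := hp.out.one_lt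
  have hb2 := c.cardE
  rw [hb] at hb2 hlt
  rw [hd] at hlt
  have h1 : b ≤ 2 := (Nat.pow_le_pow_iff_right hp1).mp hb2
  have h2 : d < b := (Nat.pow_lt_pow_iff_right hp1).mp hlt
  have h3 : Nat.card (omega1 p T) ≤ p := by
    rw [hd]; calc p ^ d ≤ p ^ 1 := Nat.pow_le_pow_right hp.out.pos (by omega)
      _ = p := pow_one p
  have h4 : zpowers a = omega1 p T := by
    apply Subgroup.eq_of_le_of_card_ge (zpowers_le.mpr haW)
    rw [Nat.card_zpowers, orderOf_eq_prime (c.powE haE) ha1]; exact h3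
  rw [← h4] at hg1
  refine pRes_of_pel ?_ hg1
  intro k hk n hn
  rw [mem_centralizer_singleton_iff]
  have := pel_comm hn (c.powE haE) ((mem_normalizer_iff.mp hk a).mp (mem_zpowers a))
  rw [mul_inv_eq_iff_eq_mul] at this
  exact this

end Cfg

lemma presE_U {G : Type*} [Group G] [Finite G] {p : ℕ} [hp : Fact p.Prime] (hodd : Odd p)
    {S : Sylow p G} {x q z : G} {M : ℕ} (c : Cfg p (S : Subgroup G) x q z M) :
    pResidual p (Subgroup.normalizer (omega1 p (S : Subgroup G) : Set G)) ≤ c.U := by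
  refine (closure_le _).mpr ?_
  rintro g ⟨hg, n, hn⟩
  exact c.pel_U hn (normE_normZ hodd c hg) ((mem_normalizer_iff.mp hg q).mp c.qE)

theorem main_cfg {G : Type*} [Group G] [Finite G] {p : ℕ} [hp : Fact p.Prime] (hodd : Odd p)
    {S : Sylow p G} {x q z : G} {M : ℕ} (c : Cfg p (S : Subgroup G) x q z M)
    {u : G} (huE : u ∈ omega1 p (S : Subgroup G)) (huz : u ∉ zpowers z) :
    grodalSubgroup p (S : Subgroup G) =
      Subgroup.closure
        (((Subgroup.normalizer ((S : Subgroup G) : Set G) ⊓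
            pResidual p (Subgroup.normalizer (zpowers z : Set G)) :
              Subgroup G) : Set G) ∪
          {g : G | g ∈ Subgroup.normalizer ((S : Subgroup G) : Set G) ∧ ∃ h h' t : G,
            h ∈ pResidual p (Subgroup.normalizer (omega1 p (S : Subgroup G) : Set G)) ∧
            h ∈ Subgroup.centralizer {u} ∧
            h' ∈ pResidual p (Subgroup.centralizer {u}) ∧
            t ∈ (S : Subgroup G) ∧ g = h * h' * t}) := by
  have hSP : IsPGroup p (S : Subgroup G) := S.isPGroup'
  have hSN : (S : Subgroup G) ≤ Subgroup.normalizer ((S : Subgroup G) : Set G) := le_normalizer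
  have hSE : (S : Subgroup G) ≤ pResidual p (Subgroup.normalizer (omega1 p (S : Subgroup G) : Set G)) :=
    le_pRes hSP (hSN.trans (norm_omega _))
  have hUZ : Subgroup.normalizer (omega1 p (S : Subgroup G) : Set G) ≤
      Subgroup.normalizer (zpowers z : Set G) := by
    intro g hg
    refine mem_normalizer_fintype ?_
    rintro _ ⟨k, rfl⟩
    simp only
    rw [← conj_zpow]
    exact zpow_mem (normE_normZ hodd c hg) k
  have hSZ : (S : Subgroup G) ≤ pResidual p (Subgroup.normalizer (zpowers z : Set G)) :=
    hSE.trans (pRes_mono hUZ)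
  have hu1 : u ≠ 1 := fun h => huz (by rw [h]; exact one_mem _)
  have cent_norm : ∀ a : G, Subgroup.centralizer {a} ≤ Subgroup.normalizer (zpowers a : Set G) := by
    intro a k hk
    refine mem_normalizer_fintype ?_
    rintro _ ⟨i, rfl⟩
    simp only
    rw [← conj_zpow, mem_centralizer_singleton_iff.mp hk, mul_inv_cancel_right]
    exact ⟨i, rfl⟩
  apply le_antisymm
  · refine (closure_le _).mpr ?_
    rintro g ⟨hgN, n, hn, Q, gs, hQ, hgs, hgp, hQ01, hch⟩
    -- membership facts valid for all a in Q 0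
    have hmem : ∀ a ∈ Q 0, ∀ i < n, (partialProd gs i)⁻¹ * a * partialProd gs i ∈ Q (i + 1) := by
      intro a ha i hi
      rcases Nat.eq_zero_or_pos i with rfl | hi0
      · simpa [partialProd] using hQ01 ha
      · exact hch i hi0 (by omega) a ha
    obtain ⟨a0, ha0, ha01⟩ := (Q 0).ne_bot_iff_exists_ne_one.mp (hQ 0 (by omega)).1 |>.elim
      fun a h => (⟨a.1, a.2, fun h' => h (Subtype.ext h')⟩ : ∃ a ∈ Q 0, a ≠ 1)
    obtain ⟨a, haQ, hap, ha1⟩ : ∃ a ∈ Q 0, a ^ p = 1 ∧ a ≠ 1 := by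
      obtain ⟨k, hk⟩ := IsPGroup.iff_orderOf.mp hSP ⟨a0, (hQ 0 (by omega)).2 ha0⟩
      rw [orderOf_mk] at hk
      obtain ⟨k, rfl⟩ : ∃ k', k = k' + 1 := Nat.exists_eq_succ_of_ne_zero (by
        rintro rfl; apply ha01; simpa using hk)
      refine ⟨a0 ^ p ^ k, pow_mem ha0 _, ?_, ?_⟩
      · rw [← pow_mul, ← pow_succ, ← hk, pow_orderOf_eq_one]
      · intro h
        have := orderOf_dvd_of_pow_eq_one h
        rw [hk, Nat.pow_dvd_pow_iff_le_right hp.out.one_lt] at this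
        omega
    have haS : a ∈ (S : Subgroup G) := (hQ 0 (by omega)).2 haQ
    have haE : a ∈ omega1 p (S : Subgroup G) := Subgroup.subset_closure ⟨haS, hap⟩
    by_cases haz : a ∈ zpowers z
    · apply Subgroup.subset_closure
      left
      refine ⟨hgN, ?_⟩
      have : ∀ i ≤ n, partialProd gs i ∈ pResidual p (Subgroup.normalizer (zpowers z : Set G)) := by
        intro i
        induction i with
        | zero => intro _; simp [partialProd]
        | succ i ih =>
          intro hi
          have h0 := ih (by omega)
          rw [partialProd_succ]
          refine mul_mem h0 ?_
          have h1 := hmem a haQ i (by omega)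
          have h2 : (partialProd gs i)⁻¹ * a * partialProd gs i ∈ zpowers z :=
            (mem_normalizer_iff''.mp (pRes_le _ h0) a).mp haz
          set b := (partialProd gs i)⁻¹ * a * partialProd gs i with hb
          have hb1 : b ≠ 1 := by
            intro h
            apply ha1
            have : a = partialProd gs i * b * (partialProd gs i)⁻¹ := by rw [hb]; group
            rw [this, h]; group
          have hbE : b ∈ omega1 p (S : Subgroup G) := (zpowers_le.mpr c.zE) h2
          rcases c.classify hSP (hQ (i + 1) hi).2 h1 hbE hb1 (hgs (i + 1) (by omega) hi) with h3 | h3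
          · exact pRes_mono hUZ h3
          · have hbz : zpowers b = zpowers z := by
              apply Subgroup.eq_of_le_of_card_ge (zpowers_le.mpr h2)
              rw [Nat.card_zpowers, Nat.card_zpowers, orderOf_eq_prime (c.powE hbE) hb1,
                orderOf_eq_prime c.zp c.z1]
            rw [← hbz]
            exact pRes_mono (cent_norm b) h3
      rw [hgp]
      exact this n le_rfl
    · -- case B
      obtain ⟨k, j, hkj⟩ := c.zpow_mul_eq haE haz huE
      obtain ⟨s₀, hs₀, hs₀u⟩ := c.trans huE huz j
      have hbQ : s₀⁻¹ * u * s₀ ∈ Q 0 := by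
        rw [hs₀u, ← hkj]; exact zpow_mem haQ k
      have key : ∀ i ≤ n, ∃ s ∈ (S : Subgroup G), ∃ h h' : G,
          h ∈ pResidual p (Subgroup.normalizer (omega1 p (S : Subgroup G) : Set G)) ∧
          h ∈ Subgroup.centralizer {u} ∧ h' ∈ pResidual p (Subgroup.centralizer {u}) ∧
          s₀ * partialProd gs i = h * h' * s := by
        intro i
        induction i with
        | zero =>
          intro _
          exact ⟨s₀, hs₀, 1, 1, one_mem _, one_mem _, one_mem _, by simp [partialProd]⟩
        | succ i ih =>
          intro hi
          obtain ⟨s, hs, h, h', hh, hhu, hh', heq⟩ := ih (by omega)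
          have h1 := hmem _ hbQ i (by omega)
          have hcu : h * h' ∈ Subgroup.centralizer {u} := mul_mem hhu (pRes_le _ hh')
          rw [mem_centralizer_singleton_iff] at hcu
          have e1 : (partialProd gs i)⁻¹ * (s₀⁻¹ * u * s₀) * partialProd gs i = s⁻¹ * u * s := by
            calc _ = (s₀ * partialProd gs i)⁻¹ * u * (s₀ * partialProd gs i) := by group
              _ = s⁻¹ * ((h * h')⁻¹ * (u * (h * h'))) * s := by rw [heq]; group
              _ = _ := by rw [← hcu]; group
          rw [e1] at h1
          have hbE : s⁻¹ * u * s ∈ omega1 p (S : Subgroup G) :=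
            (mem_normalizer_iff''.mp (norm_omega _ (hSN hs)) u).mp huE
          have hb1 : s⁻¹ * u * s ≠ 1 := by
            intro h
            apply hu1
            have : u = s * (s⁻¹ * u * s) * s⁻¹ := by group
            rw [this, h]; group
          rw [partialProd_succ]
          rcases c.classify hSP (hQ (i + 1) hi).2 h1 hbE hb1 (hgs (i + 1) (by omega) hi) with h3 | h3
          · set g' := gs (i + 1)
            have h4 : (s * g')⁻¹ ∈ c.U :=
              inv_mem (presE_U hodd c (mul_mem (hSE hs) h3))
            obtain ⟨j', hj'⟩ := c.U_act h4 huE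
            obtain ⟨s', hs', hs'u⟩ := c.trans huE huz j'
            have hku : s * g' * s'⁻¹ ∈ Subgroup.centralizer {u} := by
              rw [mem_centralizer_singleton_iff]
              rw [← hs'u, inv_inv] at hj'
              calc _ = s * g' * (s'⁻¹ * u * s') * s'⁻¹ := by group
                _ = _ := by rw [← hj']; group
            have hkE : s * g' * s'⁻¹ ∈ pResidual p (Subgroup.normalizer (omega1 p (S : Subgroup G) : Set G)) :=
              mul_mem (mul_mem (hSE hs) h3) (inv_mem (hSE hs'))
            refine ⟨s', hs', h * (s * g' * s'⁻¹), (s * g' * s'⁻¹)⁻¹ * h' * (s * g' * s'⁻¹)⁻¹⁻¹,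
              mul_mem hh hkE, mul_mem hhu hku, ?_, ?_⟩
            · refine pRes_conj ?_ hh'
              intro y hy
              exact mul_mem (mul_mem (inv_mem hku) hy) (inv_mem (inv_mem hku))
            · rw [← mul_assoc, heq]; group
          · set g' := gs (i + 1)
            refine ⟨s, hs, h, h' * (s * g' * s⁻¹), hh, hhu, mul_mem hh' ?_, ?_⟩
            · refine pRes_conj ?_ h3
              intro y hy
              rw [mem_centralizer_singleton_iff] at hy ⊢
              calc _ = s * (y * (s⁻¹ * u * s)) * s⁻¹ := by group
                _ = _ := by rw [hy]; group
            · rw [← mul_assoc, heq]; group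
      obtain ⟨s, hs, h, h', hh, hhu, hh', heq⟩ := key n le_rfl
      have hg1 : g = s₀⁻¹ * (s₀ * g) := by group
      rw [hg1]
      refine mul_mem (inv_mem (Subgroup.subset_closure (Or.inl ⟨hSN hs₀, hSZ hs₀⟩)))
        (Subgroup.subset_closure (Or.inr ⟨mul_mem (hSN hs₀) hgN, h, h', s, hh, hhu, hh', hs, ?_⟩))
      rw [hgp, heq]
  · refine (closure_le _).mpr ?_
    rintro g (⟨hgN, hgZ⟩ | ⟨hgN, h, h', t, hh, hhu, hh', ht, rfl⟩)
    · apply Subgroup.subset_closure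
      refine ⟨hgN, 1, le_rfl, fun _ => zpowers z, fun _ => g, ?_, ?_, ?_, le_rfl, ?_⟩
      · intro _ _
        exact ⟨by rw [Ne, zpowers_eq_bot]; exact c.z1, zpowers_le.mpr c.hz⟩
      · intro _ _ _; exact hgZ
      · simp [partialProd]
      · intro i h1 h2; omega
    · apply Subgroup.subset_closure
      have hune : zpowers u ≠ ⊥ := by rw [Ne, zpowers_eq_bot]; exact hu1
      have huEl : zpowers u ≤ omega1 p (S : Subgroup G) := zpowers_le.mpr huE
      have hEne : omega1 p (S : Subgroup G) ≠ ⊥ := fun h => hune (by rw [h] at huEl; exact le_bot_iff.mp huEl)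
      have hh'u : h' ∈ Subgroup.centralizer {u} := pRes_le _ hh'
      have fix : ∀ k ∈ Subgroup.centralizer {u}, ∀ y ∈ zpowers u, k⁻¹ * y * k ∈ zpowers u := by
        intro k hk y hy
        exact (mem_normalizer_iff''.mp (cent_norm u hk) y).mp hy
      refine ⟨hgN, 3, by norm_num,
        fun i => if i = 0 ∨ i = 2 then zpowers u else omega1 p (S : Subgroup G),
        fun i => if i = 1 then h else if i = 2 then h' else t, ?_, ?_, ?_, ?_, ?_⟩
      · intro i _
        dsimp only
        split_ifs
        · exact ⟨hune, huEl.trans c.ES⟩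
        · exact ⟨hEne, c.ES⟩
      · intro i h1 h3
        interval_cases i
        · simpa using hh
        · simpa using pRes_mono (cent_norm u) hh'
        · simpa using hSE ht
      · simp [partialProd, List.range_succ, mul_assoc]
      · simpa using huE
      · intro i h1 h2 y hy
        have hy' : y ∈ zpowers u := by simpa using hy
        have : i = 1 ∨ i = 2 := by omega
        rcases this with rfl | rfl
        · simpa [partialProd] using fix h hhu y hy'
        · have := huEl (fix _ (mul_mem hhu hh'u) y hy')
          simpa [partialProd, List.range_succ] using this

theorem stmt17 (p : ℕ) [Fact p.Prime] (hodd : Odd p) {G : Type*} [Group G] [Fintype G]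
    (hdvd : p ∣ Fintype.card G) (S : Sylow p G)
    (hsplit : IsSplitMetacyclic (S : Subgroup G))
    (hE : ¬omega1 p (S : Subgroup G) ≤
      (S : Subgroup G) ⊓ Subgroup.centralizer ((S : Subgroup G) : Set G))
    (hspe : ¬∃ H : Subgroup G, H ≠ ⊤ ∧ IsStronglyPEmbedded p H)
    (Q : Subgroup G) (hQE : Q ≤ omega1 p (S : Subgroup G)) (hQcard : Nat.card Q = p)
    (hQZ : ¬Q ≤ (S : Subgroup G) ⊓ Subgroup.centralizer ((S : Subgroup G) : Set G)) :
    grodalSubgroup p (S : Subgroup G) =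
      Subgroup.closure
        (((Subgroup.normalizer ((S : Subgroup G) : Set G) ⊓
            pResidual p (Subgroup.normalizer ((omega1 p (S : Subgroup G) ⊓
              ((S : Subgroup G) ⊓ Subgroup.centralizer ((S : Subgroup G) : Set G)) :
                Subgroup G) : Set G)) :
              Subgroup G) : Set G) ∪
          {g : G | g ∈ Subgroup.normalizer ((S : Subgroup G) : Set G) ∧ ∃ h h' t : G,
            h ∈ pResidual p (Subgroup.normalizer (omega1 p (S : Subgroup G) : Set G)) ∧
            h ∈ Subgroup.centralizer (Q : Set G) ∧
            h' ∈ pResidual p (Subgroup.centralizer (Q : Set G)) ∧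
            t ∈ (S : Subgroup G) ∧ g = h * h' * t}) := by
  have hp : p.Prime := Fact.out
  have hex : ∃ e : (S : Subgroup G), e ^ p = 1 ∧ ∃ s : (S : Subgroup G), e * s ≠ s * e := by
    by_contra hcon
    push Not at hcon
    apply hE
    refine (closure_le _).mpr ?_
    rintro e ⟨heS, hep⟩
    refine ⟨heS, mem_centralizer_iff.mpr fun s hs => ?_⟩
    have := hcon ⟨e, heS⟩ (Subtype.ext (by simpa using hep)) ⟨s, hs⟩
    exact (congrArg Subtype.val this).symm
  obtain ⟨x, q, z, M, h1, h2, h3, h4, h5, h6, h7, h8⟩ :=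
    struct_lemma hodd S.isPGroup' hsplit hex
  have c : Cfg p (S : Subgroup G) (x : G) (q : G) (z : G) M := {
    hx := x.2
    hq := q.2
    hz := z.2
    xM := by simpa using congrArg Subtype.val h1
    z1 := fun h => h2 (Subtype.ext h)
    zp := by simpa using congrArg Subtype.val h3
    zc := fun s hs => congrArg Subtype.val (h4 ⟨s, hs⟩)
    qp := by simpa using congrArg Subtype.val h5
    act := by simpa using congrArg Subtype.val h6
    gen := fun s hs hsp => by
      obtain ⟨i, j, hij⟩ := h7 ⟨s, hs⟩ (Subtype.ext (by simpa using hsp))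
      exact ⟨i, j, by simpa using congrArg Subtype.val hij⟩
    sh := fun s hs hsq => by
      have := h8 ⟨s, hs⟩ (Subtype.ext (by simpa using hsq))
      simpa using congrArg Subtype.val this }
  obtain ⟨u, huQ, huc⟩ := Set.not_subset.mp hQZ
  have huz : u ∉ zpowers (z : G) := by
    intro h
    rw [← c.Zeq] at h
    exact huc h.2
  have hu1 : u ≠ 1 := fun h => huz (by rw [h]; exact one_mem _)
  have hQu : Q = zpowers u := by
    symm
    apply Subgroup.eq_of_le_of_card_ge (zpowers_le.mpr huQ)
    rw [Nat.card_zpowers, orderOf_eq_prime (c.powE (hQE huQ)) hu1, hQcard]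
  have hcent : Subgroup.centralizer (Q : Set G) = Subgroup.centralizer {u} := by
    rw [hQu, zpowers_eq_closure, centralizer_closure]
  rw [c.Zeq, hcent]
  exact main_cfg hodd c (hQE huQ) huz
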